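/- As the positive integer a → ∞, the ratio of binomial coefficients binom(8a²−1, 4a²−1) · binom(8a²−5, 4a²−1) / ( binom(8a²+2a−1, 4a²+a−1) · binom(8a²−2a−5, 4a²+a−1) ) converges to Euler's number e. -/

import Mathlib

open Filter

noncomputable def PP (s : ℝ) (n k : ℕ) : ℝ := ∏ i ∈ Finset.range k, (1 + s * i / n)

lemma log_bd (x : ℝ) (hx : |x| ≤ 1/2) : |Real.log (1 + x) - x| ≤ 2 * x ^ 2 := by
  have h1 := abs_le.1 hx
  have hp : 0 < 1 + x := by linarith
  have hu := Real.log_le_sub_one_of_pos hp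
  have hl := Real.one_sub_inv_le_log_of_pos hp
  have : 1 - (1 + x)⁻¹ - x ≥ - (2 * x ^ 2) := by
    have : 1 - (1 + x)⁻¹ - x = - (x ^ 2 / (1 + x)) := by field_simp; ring
    rw [this]
    have : x ^ 2 / (1 + x) ≤ 2 * x ^ 2 := by
      rw [div_le_iff₀ hp]; nlinarith [sq_nonneg x]
    linarith
  rw [abs_le]; constructor
  · linarith
  · nlinarith [sq_nonneg x]

lemma PP_bd (s : ℝ) (hs : |s| = 1) (n k : ℕ) (hn : 0 < n) (hk : 2 * k ≤ n) :
    0 < PP s n k ∧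
    |Real.log (PP s n k) - s * ((k : ℝ) * (k - 1) / 2 / n)| ≤ 2 * ((k : ℝ) ^ 3 / n ^ 2) := by
  have hn' : (0 : ℝ) < n := by exact_mod_cast hn
  have hb : ∀ i ∈ Finset.range k, |s * i / n| ≤ 1 / 2 := by
    intro i hi
    have hi : i < k := Finset.mem_range.1 hi
    have : (2 * i : ℝ) ≤ n := by exact_mod_cast (by omega : 2 * i ≤ n)
    rw [abs_div, abs_mul, hs, Nat.abs_cast, Nat.abs_cast, div_le_iff₀ hn']
    linarith
  have hpos : ∀ i ∈ Finset.range k, 0 < 1 + s * i / n := fun i hi => by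
    have := abs_le.1 (hb i hi); linarith
  refine ⟨Finset.prod_pos hpos, ?_⟩
  have hsum : s * ((k : ℝ) * (k - 1) / 2 / n) = ∑ i ∈ Finset.range k, s * (i : ℝ) / n := by
    clear hb hpos hk
    induction k with
    | zero => simp
    | succ k ih => rw [Finset.sum_range_succ, ← ih]; push_cast; field_simp; ring
  rw [PP, Real.log_prod (fun i hi => (hpos i hi).ne'), hsum, ← Finset.sum_sub_distrib]
  refine (Finset.abs_sum_le_sum_abs _ _).trans ?_
  have : ∀ i ∈ Finset.range k, |Real.log (1 + s * i / n) - s * i / n| ≤ 2 * ((k : ℝ) ^ 2 / n ^ 2) := by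
    intro i hi
    refine (log_bd _ (hb i hi)).trans ?_
    have hi : (i : ℝ) ≤ k := by exact_mod_cast (Finset.mem_range.1 hi).le
    have hs2 : s ^ 2 = 1 := by rw [← sq_abs, hs]; norm_num
    rw [div_pow, mul_pow, hs2, one_mul]
    gcongr
  refine (Finset.sum_le_sum this).trans ?_
  rw [Finset.sum_const, Finset.card_range, nsmul_eq_mul]
  apply le_of_eq; ring

lemma PP_lim (s : ℝ) (hs : |s| = 1) (d c e : ℕ) (hd : 0 < d) :
    Tendsto (fun a : ℕ => PP s (d * a ^ 2) (c * a + e)) atTop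
      (nhds (Real.exp (s * ((c : ℝ) ^ 2 / (2 * d))))) := by
  have hd' : (0 : ℝ) < d := by exact_mod_cast hd
  have ht : Tendsto (fun a : ℕ => ((a : ℝ))⁻¹) atTop (nhds 0) :=
    tendsto_inv_atTop_nhds_zero_nat
  have hev : ∀ᶠ a : ℕ in atTop, 0 < d * a ^ 2 ∧ 2 * (c * a + e) ≤ d * a ^ 2 := by
    filter_upwards [eventually_ge_atTop (2 * c + 2 * e + 1)] with a ha
    have : 1 * a ^ 2 ≤ d * a ^ 2 := Nat.mul_le_mul_right _ hd
    constructor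
    · have : 0 < a := by omega
      positivity
    · nlinarith
  have hlog : Tendsto (fun a : ℕ => Real.log (PP s (d * a ^ 2) (c * a + e))) atTop
      (nhds (s * ((c : ℝ) ^ 2 / (2 * d)))) := by
    have h1 : Tendsto (fun a : ℕ => s * (((c * a + e : ℕ) : ℝ) * (((c * a + e : ℕ) : ℝ) - 1) / 2 / ((d * a ^ 2 : ℕ) : ℝ))) atTop (nhds (s * ((c : ℝ) ^ 2 / (2 * d)))) := by
      have : Tendsto (fun a : ℕ => s * ((c + e * (a : ℝ)⁻¹) * (c + (e - 1) * (a : ℝ)⁻¹) / (2 * d))) atTop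
          (nhds (s * ((c + e * 0) * (c + (e - 1) * 0) / (2 * d)))) :=
        ((((ht.const_mul _).const_add _).mul ((ht.const_mul _).const_add _)).div_const _).const_mul _
      have e0 : s * (((c : ℝ) + e * 0) * (c + (e - 1) * 0) / (2 * d)) = s * ((c : ℝ) ^ 2 / (2 * d)) := by ring
      rw [e0] at this
      refine this.congr' ?_
      filter_upwards [eventually_gt_atTop 0] with a ha
      have : (0 : ℝ) < a := by exact_mod_cast ha
      push_cast
      field_simp
      ring
    have h2 : Tendsto (fun a : ℕ => 2 * (((c * a + e : ℕ) : ℝ) ^ 3 / ((d * a ^ 2 : ℕ) : ℝ) ^ 2)) atTop (nhds 0) := by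
      have : Tendsto (fun a : ℕ => 2 * ((c + e * (a : ℝ)⁻¹) ^ 3 * (a : ℝ)⁻¹ / d ^ 2)) atTop
          (nhds (2 * (((c : ℝ) + e * 0) ^ 3 * 0 / (d : ℝ) ^ 2))) :=
        (((((ht.const_mul _).const_add _).pow 3).mul ht).div_const _).const_mul _
      have e0 : 2 * (((c : ℝ) + e * 0) ^ 3 * 0 / d ^ 2) = 0 := by ring
      rw [e0] at this
      refine this.congr' ?_
      filter_upwards [eventually_gt_atTop 0] with a ha
      have : (0 : ℝ) < a := by exact_mod_cast ha
      push_cast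
      field_simp
    have h3 : Tendsto (fun a : ℕ => Real.log (PP s (d * a ^ 2) (c * a + e)) - s * (((c * a + e : ℕ) : ℝ) * (((c * a + e : ℕ) : ℝ) - 1) / 2 / ((d * a ^ 2 : ℕ) : ℝ))) atTop (nhds 0) := by
      apply squeeze_zero_norm' _ h2
      filter_upwards [hev] with a ha
      exact (PP_bd s hs _ _ ha.1 ha.2).2
    simpa using h3.add h1
  refine ((Real.continuous_exp.tendsto _).comp hlog).congr' ?_
  filter_upwards [hev] with a ha
  exact Real.exp_log (PP_bd s hs _ _ ha.1 ha.2).1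

lemma PP_asc (m k : ℕ) :
    ((m + k).factorial : ℝ) = m.factorial * (m + 1 : ℕ) ^ k * PP 1 (m + 1) k := by
  induction k with
  | zero => simp [PP]
  | succ k ih =>
    have : PP 1 (m + 1) (k + 1) = PP 1 (m + 1) k * (1 + 1 * k / (m + 1 : ℕ)) := by
      rw [PP, Finset.prod_range_succ]; rfl
    rw [this, ← add_assoc, Nat.factorial_succ, Nat.cast_mul, ih]
    have : ((m : ℝ) + 1) ≠ 0 := by positivity
    push_cast
    field_simp
    ring

lemma PP_desc (n m k : ℕ) (hn : 0 < n) (h : n = m + k) :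
    (n.factorial : ℝ) = m.factorial * (n : ℝ) ^ k * PP (-1) n k := by
  induction k generalizing m with
  | zero => simp [PP, h]
  | succ k ih =>
    have : PP (-1) n (k + 1) = PP (-1) n k * (1 + (-1) * k / n) := by
      rw [PP, Finset.prod_range_succ]; rfl
    rw [this, ih (m + 1) (by omega), Nat.factorial_succ]
    have h0 : (n : ℝ) ≠ 0 := by positivity
    have : (n : ℝ) = m + k + 1 := by rw [h]; push_cast; ring
    have : (m : ℝ) + 1 = n * (1 + -1 * k / n) := by field_simp; linarith
    push_cast
    rw [this]
    ring

lemma key (q a n : ℕ) (hn : n = q + 3 * a + 4) :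
    ((Nat.choose (2 * n - 1) (n - 1) : ℝ) * (Nat.choose (2 * n - 5) (n - 1) : ℝ)) /
      ((Nat.choose (2 * n + 2 * a - 1) (n + a - 1) : ℝ) *
        (Nat.choose (2 * n - 2 * a - 5) (n + a - 1) : ℝ)) =
    PP 1 n a ^ 3 * (1 + a / n) * PP (-1) n 4 * PP (-1) (2 * n) (2 * a + 5) /
      (PP (-1) n (3 * a + 4) * PP (-1) (2 * n) 5 * PP 1 (2 * n) (2 * a)) := by
  have ch : ∀ N k l : ℕ, N = k + l → (Nat.choose N k : ℝ) = N.factorial / (k.factorial * l.factorial) := by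
    intro N k l h
    subst h
    exact Nat.cast_add_choose ℝ
  rw [ch (2 * n - 1) (n - 1) n (by omega), ch (2 * n - 5) (n - 1) (n - 4) (by omega),
    ch (2 * n + 2 * a - 1) (n + a - 1) (n + a) (by omega),
    ch (2 * n - 2 * a - 5) (n + a - 1) q (by omega)]
  have f1 := PP_asc (n - 1) a
  have f2 := PP_desc n (n - 4) 4 (by omega) (by omega)
  have f3 := PP_desc n q (3 * a + 4) (by omega) (by omega)
  have f4 := PP_asc (2 * n - 1) (2 * a)
  have f5 := PP_desc (2 * n) (2 * n - 5) 5 (by omega) (by omega)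
  have f6 := PP_desc (2 * n) (2 * n - 2 * a - 5) (2 * a + 5) (by omega) (by omega)
  have f7 : ((n + a).factorial : ℝ) = (n + a : ℝ) * (n + a - 1).factorial := by
    rw [← Nat.mul_factorial_pred (by omega : n + a ≠ 0)]; push_cast; ring
  have f8 : (n.factorial : ℝ) = (n : ℝ) * (n - 1).factorial := by
    rw [← Nat.mul_factorial_pred (by omega : n ≠ 0)]; push_cast; ring
  rw [show n - 1 + a = n + a - 1 by omega, show n - 1 + 1 = n by omega] at f1
  rw [show 2 * n - 1 + 2 * a = 2 * n + 2 * a - 1 by omega, show 2 * n - 1 + 1 = 2 * n by omega] at f4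
  have g : ∀ k : ℕ, (k.factorial : ℝ) ≠ 0 := fun k => by positivity
  have hn0 : (n : ℝ) ≠ 0 := by
    have : n ≠ 0 := by omega
    exact_mod_cast this
  have hna : (n : ℝ) + a ≠ 0 := by
    have : n + a ≠ 0 := by omega
    exact_mod_cast this
  have h2n0 : ((2 * n : ℕ) : ℝ) ≠ 0 := by push_cast; positivity
  have nz : ∀ x y z w : ℝ, w = x * y * z → w ≠ 0 → z ≠ 0 := by
    rintro x y z w h hw rfl; simp at h; exact hw h
  have z1 := nz _ _ _ _ f1 (g _)
  have z2 := nz _ _ _ _ f2 (g _)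
  have z3 := nz _ _ _ _ f3 (g _)
  have z4 := nz _ _ _ _ f4 (g _)
  have z5 := nz _ _ _ _ f5 (g _)
  have z6 := nz _ _ _ _ f6 (g _)
  have sol : ∀ x y z w : ℝ, w = x * y * z → y ≠ 0 → w ≠ 0 → x ≠ 0 → z = w / (x * y) := by
    intro x y z w h hy hw hx
    rw [h]; field_simp
  rw [sol _ _ _ _ f1 (pow_ne_zero _ hn0) (g _) (g _), sol _ _ _ _ f2 (pow_ne_zero _ hn0) (g _) (g _),
    sol _ _ _ _ f3 (pow_ne_zero _ hn0) (g _) (g _), sol _ _ _ _ f4 (pow_ne_zero _ h2n0) (g _) (g _),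
    sol _ _ _ _ f5 (pow_ne_zero _ h2n0) (g _) (g _), sol _ _ _ _ f6 (pow_ne_zero _ h2n0) (g _) (g _),
    f7, f8]
  have p1 := g (n - 1)
  have p2 := g (n - 4)
  have p3 := g (n + a - 1)
  have p4 := g q
  have p5 := g (2 * n)
  have p6 := g (2 * n - 1)
  have p7 := g (2 * n - 5)
  have p8 := g (2 * n + 2 * a - 1)
  have p9 := g (2 * n - 2 * a - 5)
  generalize ((2 * n : ℕ) : ℝ) = N at *
  have hsum : 1 + (a : ℝ) / n = (n + a) / n := by field_simp
  rw [hsum]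
  have e1 : (n : ℝ) ^ (3 * a + 4) = (n ^ a) ^ 3 * n ^ 4 := by rw [pow_add, mul_comm 3 a, pow_mul]
  have e2 : N ^ (2 * a + 5) = N ^ (2 * a) * N ^ 5 := pow_add _ _ _
  rw [e1, e2]
  have q1 : (n : ℝ) ^ a ≠ 0 := pow_ne_zero _ hn0
  have q2 : N ^ (2 * a) ≠ 0 := pow_ne_zero _ h2n0
  generalize (n : ℝ) ^ a = X at *
  generalize N ^ (2 * a) = Y at *
  field_simp

theorem stmt19 :
    Tendsto
      (fun a : ℕ =>
        ((Nat.choose (8 * a ^ 2 - 1) (4 * a ^ 2 - 1) : ℝ) *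
            (Nat.choose (8 * a ^ 2 - 5) (4 * a ^ 2 - 1) : ℝ)) /
          ((Nat.choose (8 * a ^ 2 + 2 * a - 1) (4 * a ^ 2 + a - 1) : ℝ) *
            (Nat.choose (8 * a ^ 2 - 2 * a - 5) (4 * a ^ 2 + a - 1) : ℝ)))
      atTop (nhds (Real.exp 1)) := by
  have o : |(1 : ℝ)| = 1 := by simp
  have m : |(-1 : ℝ)| = 1 := by simp
  have l1 := PP_lim 1 o 4 1 0 (by norm_num)
  have l2 := PP_lim (-1) m 4 0 4 (by norm_num)
  have l3 := PP_lim (-1) m 4 3 4 (by norm_num)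
  have l4 := PP_lim 1 o 8 2 0 (by norm_num)
  have l5 := PP_lim (-1) m 8 0 5 (by norm_num)
  have l6 := PP_lim (-1) m 8 2 5 (by norm_num)
  have ht : Tendsto (fun a : ℕ => 1 + ((a : ℝ))⁻¹ / 4) atTop (nhds (1 + 0 / 4)) :=
    (tendsto_inv_atTop_nhds_zero_nat.div_const _).const_add _
  have L := ((((l1.pow 3).mul ht).mul l2).mul l6).div ((l3.mul l5).mul l4) (by positivity)
  convert L.congr' ?_ using 2
  · simp only [← Real.exp_nat_mul, ← Real.exp_add]
    norm_num
    simp only [← Real.exp_nat_mul, ← Real.exp_add, ← Real.exp_sub, ← Real.exp_neg]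
    norm_num
  · filter_upwards [eventually_ge_atTop 2] with a ha
    obtain ⟨q, hq⟩ : ∃ q, 4 * a ^ 2 = q + 3 * a + 4 :=
      ⟨4 * a ^ 2 - 3 * a - 4, by have : 3 * a + 4 ≤ 4 * a ^ 2 := by nlinarith
                                 omega⟩
    have k := key q a _ hq
    rw [show 2 * (4 * a ^ 2) = 8 * a ^ 2 by ring] at k
    rw [k]
    have : (0 : ℝ) < a := by exact_mod_cast (by omega : 0 < a)
    have hh : 1 + (a : ℝ) / ((4 * a ^ 2 : ℕ) : ℝ) = 1 + (a : ℝ)⁻¹ / 4 := by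
      push_cast; field_simp
    rw [hh]
    simp only [one_mul, zero_mul, zero_add, add_zero, Pi.div_apply]
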